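/- Let m ∈ ℕ with m ≥ 1 and let A ⊆ ℕ^m. Then the following are equivalent: (1) there exist functions α₁,…,α_m : 𝒫_f(ℕ^ℕ) → ℕ and H₁,…,H_m : 𝒫_f(ℕ^ℕ) → 𝒫_f(ℕ) such that (a) whenever F, G ∈ 𝒫_f(ℕ^ℕ) and F ⊊ G one has max H_j(F) < min H_j(G) for every j ∈ {1,…,m}, and (b) whenever n ≥ m, G₁ ⊊ G₂ ⊊ ⋯ ⊊ G_n in 𝒫_f(ℕ^ℕ), f_i ∈ G_i for each i ∈ {1,…,n}, and β₁ < β₂ < ⋯ < β_m are nonempty subsets of {1,…,n}, the tuple (Σ_{i∈β₁}(α₁(G_i)+Σ_{t∈H₁(G_i)}f_i(t)), …, Σ_{i∈β_m}(α_m(G_i)+Σ_{t∈H_m(G_i)}f_i(t))) belongs to A; (2) there exist idempotent ultrafilters p₁,…,p_m ∈ 𝒥 such that A ∈ ⊗_{i=1}^m p_i. -/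

import Mathlib

namespace MultiCST

/-- The sum `p + q` of ultrafilters on ℕ: `A ∈ p + q` iff `{x : {y : x+y ∈ A} ∈ q} ∈ p`. -/
def uAdd (p q : Ultrafilter ℕ) : Ultrafilter ℕ :=
  p.bind fun x => q.map fun y => x + y

/-- `A ⊆ ℕ` is a J-set. -/
def IsJSet (A : Set ℕ) : Prop :=
  ∀ F : Finset (ℕ → ℕ), F.Nonempty →
    ∃ (a : ℕ) (β : Finset ℕ), β.Nonempty ∧ ∀ f ∈ F, a + ∑ t ∈ β, f t ∈ A

/-- `p ∈ 𝒥`: every member of `p` is a J-set. -/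
def MemJ (p : Ultrafilter ℕ) : Prop := ∀ A : Set ℕ, A ∈ p → IsJSet A

/-- `p` is an idempotent ultrafilter. -/
def IdempotentUF (p : Ultrafilter ℕ) : Prop := uAdd p p = p

/-- `p` is a minimal idempotent ultrafilter. -/
def IsMinimalIdempotent (p : Ultrafilter ℕ) : Prop :=
  IdempotentUF p ∧
    ∀ q : Ultrafilter ℕ, IdempotentUF q → uAdd q p = q → uAdd p q = q → q = p

/-- Tensor product `⊗_{i=1}^m p_i` of ultrafilters on ℕ, as an ultrafilter on `Fin m → ℕ`. -/
def tensor : ∀ m : ℕ, (Fin m → Ultrafilter ℕ) → Ultrafilter (Fin m → ℕ)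
  | 0, _ => pure fun i => i.elim0
  | m + 1, p =>
      (p 0).bind fun x => (tensor m fun i => p i.succ).map fun v => Fin.cons x v

/-- `f : ℕ → ℕ` is (given by) a polynomial with coefficients in ℕ and zero constant term. -/
def IsPolyZeroConst (f : ℕ → ℕ) : Prop :=
  ∃ P : Polynomial ℕ, P.coeff 0 = 0 ∧ ∀ x, f x = P.eval x

/-- The linear combination `a₁·p₁ + a₂·p₂ + ⋯ + a_m·p_m` of ultrafilters on ℕ. -/
def linComb : ∀ m : ℕ, (Fin m → ℕ) → (Fin m → Ultrafilter ℕ) → Ultrafilter ℕ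
  | 0, _, _ => pure 0
  | m + 1, a, p =>
      uAdd ((p 0).map fun x => a 0 * x)
        (linComb m (fun i => a i.succ) fun i => p i.succ)

abbrev FF := Finset (ℕ → ℕ)

theorem mem_uAdd {p q : Ultrafilter ℕ} {A : Set ℕ} :
    A ∈ uAdd p q ↔ {x | {y | x + y ∈ A} ∈ q} ∈ p := Iff.rfl

theorem mem_tensor_succ {m : ℕ} {p : Fin (m + 1) → Ultrafilter ℕ} {A : Set (Fin (m + 1) → ℕ)} :
    A ∈ tensor (m + 1) p ↔
      {x | {v | (Fin.cons x v : Fin (m + 1) → ℕ) ∈ A} ∈ tensor m fun i => p i.succ} ∈ p 0 :=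
  Iff.rfl

/-- Dependent choice along strict inclusion of finite sets. -/
theorem exists_rec {X : Type} (Inv : FF → X → Prop) (R : ∀ F : FF, (∀ G : FF, G ⊂ F → X) → X → Prop)
    (step : ∀ (F : FF) (prev : ∀ G : FF, G ⊂ F → X), (∀ G h, Inv G (prev G h)) →
      ∃ x, Inv F x ∧ R F prev x) :
    ∃ V : FF → X, ∀ F, Inv F (V F) ∧ R F (fun G _ => V G) (V F) := by
  classical
  let wf : WellFounded (fun G F : FF => G ⊂ F) := Finset.isWellFounded_ssubset.wf
  let st : ∀ F : FF, (∀ G : FF, G ⊂ F → {x // Inv G x}) → {x // Inv F x} := fun F prev =>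
    ⟨Classical.choose (step F (fun G h => (prev G h).1) (fun G h => (prev G h).2)),
      (Classical.choose_spec (step F (fun G h => (prev G h).1) (fun G h => (prev G h).2))).1⟩
  let V : ∀ F : FF, {x // Inv F x} := wf.fix st
  refine ⟨fun F => (V F).1, fun F => ⟨(V F).2, ?_⟩⟩
  have hV : V F = st F (fun G _ => V G) := wf.fix_eq st F
  have := (Classical.choose_spec (step F (fun G _ => (V G).1) (fun G _ => (V G).2))).2
  change R F (fun G _ => (V G).1) (V F).1
  rw [hV]
  exact this

theorem IsJSet.shift {A : Set ℕ} (hA : IsJSet A) (F : FF) (k : ℕ) :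
    ∃ (a : ℕ) (β : Finset ℕ), β.Nonempty ∧ (∀ t ∈ β, k < t) ∧ ∀ f ∈ F, a + ∑ t ∈ β, f t ∈ A := by
  classical
  obtain ⟨a, β, hβ, h⟩ := hA (insert 0 (F.image fun f t => f (t + (k + 1)))) (Finset.insert_nonempty _ _)
  refine ⟨a, β.map (addRightEmbedding (k + 1)), hβ.map, ?_, ?_⟩
  · intro t ht
    simp only [Finset.mem_map, addRightEmbedding_apply] at ht
    obtain ⟨s, _, rfl⟩ := ht
    omega
  · intro f hf
    have := h (fun t => f (t + (k + 1)))
      (Finset.mem_insert_of_mem (Finset.mem_image_of_mem (fun (f : ℕ → ℕ) t => f (t + (k + 1))) hf))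
    simpa [Finset.sum_map] using this

/-- `star p C`. -/
def star (p : Ultrafilter ℕ) (C : Set ℕ) : Set ℕ := {x | x ∈ C ∧ {y | x + y ∈ C} ∈ p}

theorem star_mem {p : Ultrafilter ℕ} (hp : IdempotentUF p) {C : Set ℕ} (hC : C ∈ p) :
    star p C ∈ p := by
  have h2 : C ∈ uAdd p p := by rw [hp]; exact hC
  exact Filter.inter_mem hC (mem_uAdd.1 h2)

theorem star_step {p : Ultrafilter ℕ} (hp : IdempotentUF p) {C : Set ℕ} {x : ℕ}
    (hx : x ∈ star p C) : {y | x + y ∈ star p C} ∈ p := by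
  have h2 : {y | x + y ∈ C} ∈ uAdd p p := by rw [hp]; exact hx.2
  have h3 := Filter.inter_mem hx.2 (mem_uAdd.1 h2)
  refine Filter.mem_of_superset h3 ?_
  rintro y ⟨h4, h5⟩
  refine ⟨h4, ?_⟩
  simpa [add_assoc] using h5

theorem one_dim {p : Ultrafilter ℕ} (hp : IdempotentUF p) (hJ : MemJ p) (B : FF → Set ℕ)
    (hB : ∀ F, B F ∈ p) :
    ∃ (a : FF → ℕ) (H : FF → Finset ℕ) (T : FF → Set (FF × ℕ)),
      (∀ F, (H F).Nonempty) ∧ (∀ F, (T F).Finite) ∧ (∀ F, ∀ z ∈ T F, z.2 ∈ B z.1) ∧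
      (∀ F G : FF, F ⊂ G → ∀ x ∈ H F, ∀ y ∈ H G, x < y) ∧
      (∀ F, ∀ f ∈ F, (F, a F + ∑ t ∈ H F, f t) ∈ T F) ∧
      (∀ F G : FF, G ⊂ F → ∀ z ∈ T G, ∀ f ∈ F, (z.1, z.2 + (a F + ∑ t ∈ H F, f t)) ∈ T F) := by
  classical
  obtain ⟨V, hV⟩ := exists_rec (X := ℕ × Finset ℕ × Set (FF × ℕ))
    (fun F x => x.2.1.Nonempty ∧ x.2.2.Finite ∧ ∀ z ∈ x.2.2, z.2 ∈ star p (B z.1))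
    (fun F prev x => (∀ G h, ∀ s ∈ (prev G h).2.1, ∀ t ∈ x.2.1, s < t) ∧
      (∀ f ∈ F, (F, x.1 + ∑ t ∈ x.2.1, f t) ∈ x.2.2) ∧
      (∀ G h, ∀ z ∈ (prev G h).2.2, ∀ f ∈ F, (z.1, z.2 + (x.1 + ∑ t ∈ x.2.1, f t)) ∈ x.2.2))
    (by
      intro F prev hprev
      have fin : Finite {G : FF // G ⊂ F} :=
        Set.Finite.to_subtype (s := {G : FF | G ⊂ F})
          ((Finset.finite_toSet F.powerset).subset fun G hG =>
            Finset.mem_coe.2 (Finset.mem_powerset.2 hG.subset))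
      let Z : Set (FF × ℕ) := ⋃ G : {G : FF // G ⊂ F}, (prev G.1 G.2).2.2
      have hZ : Z.Finite := Set.finite_iUnion fun G => (hprev G.1 G.2).2.1
      let K : Set ℕ := ⋃ G : {G : FF // G ⊂ F}, ((prev G.1 G.2).2.1 : Set ℕ)
      have hK : K.Finite := Set.finite_iUnion fun G => Finset.finite_toSet _
      obtain ⟨k, hk⟩ := hK.bddAbove
      have hM : star p (B F) ∩ ⋂ z ∈ Z, {y | z.2 + y ∈ star p (B z.1)} ∈ p := by
        refine Filter.inter_mem (star_mem hp (hB F)) ?_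
        refine (Filter.biInter_mem hZ).2 fun z hz => star_step hp ?_
        obtain ⟨G, hG⟩ := Set.mem_iUnion.1 hz
        exact (hprev G.1 G.2).2.2 z hG
      obtain ⟨a, β, hβ, hkβ, h⟩ := (hJ _ hM).shift F k
      refine ⟨(a, β, (fun f => (F, a + ∑ t ∈ β, f t)) '' (F : Set (ℕ → ℕ)) ∪
        (fun w : (FF × ℕ) × (ℕ → ℕ) => (w.1.1, w.1.2 + (a + ∑ t ∈ β, w.2 t))) ''
          (Z ×ˢ (F : Set (ℕ → ℕ)))), ⟨hβ, ?_, ?_⟩, ?_, ?_, ?_⟩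
      · exact ((Finset.finite_toSet F).image _).union ((hZ.prod (Finset.finite_toSet F)).image _)
      · rintro z (⟨f, hf, rfl⟩ | ⟨⟨w, f⟩, ⟨hw, hf⟩, rfl⟩)
        · exact (h f hf).1
        · exact Set.mem_iInter₂.1 (h f hf).2 w hw
      · intro G hG s hs t ht
        exact lt_of_le_of_lt (hk (Set.mem_iUnion.2 ⟨⟨G, hG⟩, hs⟩)) (hkβ t ht)
      · intro f hf
        exact Or.inl ⟨f, hf, rfl⟩
      · intro G hG z hz f hf
        exact Or.inr ⟨(z, f), ⟨Set.mem_iUnion.2 ⟨⟨G, hG⟩, hz⟩, hf⟩, rfl⟩)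
  refine ⟨fun F => (V F).1, fun F => (V F).2.1, fun F => (V F).2.2, fun F => (hV F).1.1,
    fun F => (hV F).1.2.1, fun F z hz => ((hV F).1.2.2 z hz).1, ?_, ?_, ?_⟩
  · intro F G hFG
    exact (hV G).2.1 F hFG
  · intro F
    exact (hV F).2.2.1
  · intro F G h
    exact (hV F).2.2.2 G h

theorem chain_sum_mem {a : FF → ℕ} {H : FF → Finset ℕ} {T : FF → Set (FF × ℕ)}
    (h1 : ∀ F, ∀ f ∈ F, (F, a F + ∑ t ∈ H F, f t) ∈ T F)
    (h2 : ∀ F G : FF, G ⊂ F → ∀ z ∈ T G, ∀ f ∈ F, (z.1, z.2 + (a F + ∑ t ∈ H F, f t)) ∈ T F)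
    {n : ℕ} (G : Fin n → FF) (hG : ∀ i j, i < j → G i ⊂ G j) (f : Fin n → ℕ → ℕ)
    (hf : ∀ i, f i ∈ G i) (β : Finset (Fin n)) (hβ : β.Nonempty) :
    ∃ i ∈ β, ∃ j ∈ β, (G i, ∑ i ∈ β, (a (G i) + ∑ t ∈ H (G i), f i t)) ∈ T (G j) ∧
      ∀ k ∈ β, k ≤ j := by
  classical
  induction β using Finset.induction_on_max with
  | empty => exact absurd hβ (by simp)
  | insert b s hb ih =>
    have hbs : b ∉ s := fun h => lt_irrefl _ (hb b h)
    rcases s.eq_empty_or_nonempty with rfl | hs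
    · refine ⟨b, by simp, b, by simp, ?_, by simp⟩
      simpa using h1 (G b) (f b) (hf b)
    · obtain ⟨i, hi, j, hj, hT, hmax⟩ := ih hs
      refine ⟨i, by simp [hi], b, by simp, ?_, ?_⟩
      · rw [Finset.sum_insert hbs, add_comm]
        exact h2 (G b) (G j) (hG _ _ (hb j hj)) _ hT (f b) (hf b)
      · intro k hk
        rcases Finset.mem_insert.1 hk with rfl | hk
        · exact le_rfl
        · exact (hb k hk).le

theorem forward_gen (m : ℕ) : ∀ (p : Fin m → Ultrafilter ℕ), (∀ i, IdempotentUF (p i)) →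
    (∀ i, MemJ (p i)) → ∀ (D : FF → Set (Fin m → ℕ)), (∀ F, D F ∈ tensor m p) →
    ∃ (α : Fin m → FF → ℕ) (H : Fin m → FF → Finset ℕ),
      (∀ j F, (H j F).Nonempty) ∧
      (∀ j F G, F ⊂ G → ∀ x ∈ H j F, ∀ y ∈ H j G, x < y) ∧
      (∀ n : ℕ, ∀ G : Fin n → FF, (∀ i j, i < j → G i ⊂ G j) →
        ∀ f : Fin n → ℕ → ℕ, (∀ i, f i ∈ G i) →
        ∀ β : Fin m → Finset (Fin n),
          (∀ l, (β l).Nonempty) →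
          (∀ l l' : Fin m, l < l' → ∀ x ∈ β l, ∀ y ∈ β l', x < y) →
          ∀ C : FF, (∀ l, ∀ i ∈ β l, C ⊆ G i) →
          (fun l => ∑ i ∈ β l, (α l (G i) + ∑ t ∈ H l (G i), f i t)) ∈ D C) := by
  classical
  induction m with
  | zero =>
    intro p _ _ D hD
    refine ⟨fun _ _ => 0, fun _ _ => ∅, fun j => j.elim0, fun j => j.elim0, ?_⟩
    intro n G _ f _ β _ _ C _
    obtain ⟨v, hv⟩ := Ultrafilter.nonempty_of_mem (hD C)
    convert hv
  | succ m ih =>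
    intro p hp hJ D hD
    have fins : ∀ F : FF, {C : FF | C ⊆ F}.Finite := fun F =>
      (Finset.finite_toSet F.powerset).subset fun G hG =>
        Finset.mem_coe.2 (Finset.mem_powerset.2 hG)
    let q : Fin m → Ultrafilter ℕ := fun i => p i.succ
    let S : FF → ℕ → Set (Fin m → ℕ) := fun C x => {v | (Fin.cons x v : Fin (m + 1) → ℕ) ∈ D C}
    obtain ⟨a, H, T, hH, hTf, hTB, hord, h1, h2⟩ := one_dim (hp 0) (hJ 0)
      (fun F => ⋂ C ∈ {C : FF | C ⊆ F}, {x | S C x ∈ tensor m q})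
      (fun F => (Filter.biInter_mem (fins F)).2 fun C _ => mem_tensor_succ.1 (hD C))
    obtain ⟨α', H', hH', hord', hmain⟩ := ih q (fun i => hp _) (fun i => hJ _)
      (fun F => ⋂ z ∈ T F, ⋂ C ∈ {C : FF | C ⊆ z.1}, S C z.2)
      (fun F => (Filter.biInter_mem (hTf F)).2 fun z hz =>
        (Filter.biInter_mem (fins z.1)).2 fun C hC => Set.mem_iInter₂.1 (hTB F z hz) C hC)
    refine ⟨Fin.cons a α', Fin.cons H H', ?_, ?_, ?_⟩
    · intro j; refine Fin.cases ?_ ?_ j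
      · simpa using hH
      · simpa using hH'
    · intro j; refine Fin.cases ?_ ?_ j
      · simpa using hord
      · simpa using hord'
    · intro n G hG f hf β hβ hβlt C hC
      obtain ⟨i, hi, j, hj, hT, hmax⟩ := chain_sum_mem h1 h2 G hG f hf (β 0) (hβ 0)
      have := hmain n G hG f hf (fun l => β l.succ) (fun l => hβ _)
        (fun l l' hl => hβlt _ _ (Fin.succ_lt_succ_iff.2 hl)) (G j)
        (fun l k hk => (hG _ _ (hβlt 0 l.succ (Fin.succ_pos l) j hj k hk)).subset)
      have h3 := Set.mem_iInter₂.1 (Set.mem_iInter₂.1 this _ hT) C (hC 0 i hi)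
      change Fin.cons _ _ ∈ D C at h3
      convert h3 using 1
      funext l
      refine Fin.cases ?_ ?_ l
      · simp
      · intro l; simp

structure IsCh (F : FF) (𝒢 : Finset FF) (f : FF → ℕ → ℕ) : Prop where
  nonempty : 𝒢.Nonempty
  chain : ∀ G ∈ 𝒢, ∀ G' ∈ 𝒢, G ⊂ G' ∨ G = G' ∨ G' ⊂ G
  above : ∀ G ∈ 𝒢, F ⊂ G
  mem : ∀ G ∈ 𝒢, f G ∈ G

def val (a : FF → ℕ) (h : FF → Finset ℕ) (𝒢 : Finset FF) (f : FF → ℕ → ℕ) : ℕ :=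
  ∑ G ∈ 𝒢, (a G + ∑ t ∈ h G, f G t)

def TT (a : FF → ℕ) (h : FF → Finset ℕ) (F : FF) : Set ℕ :=
  {x | ∃ 𝒢 f, IsCh F 𝒢 f ∧ x = val a h 𝒢 f}

theorem TT_anti {a : FF → ℕ} {h : FF → Finset ℕ} {F F' : FF} (hF : F ⊆ F') :
    TT a h F' ⊆ TT a h F := by
  rintro x ⟨𝒢, f, hc, rfl⟩
  exact ⟨𝒢, f, ⟨hc.nonempty, hc.chain, fun G hG => lt_of_le_of_lt hF (hc.above G hG), hc.mem⟩, rfl⟩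

theorem TT_add {a : FF → ℕ} {h : FF → Finset ℕ} {F : FF} {x : ℕ} (hx : x ∈ TT a h F) :
    ∃ F', ∀ y ∈ TT a h F', x + y ∈ TT a h F := by
  classical
  obtain ⟨𝒢, f, hc, rfl⟩ := hx
  refine ⟨𝒢.sup id, ?_⟩
  rintro y ⟨𝒢', f', hc', rfl⟩
  have hlt : ∀ G ∈ 𝒢, ∀ G' ∈ 𝒢', G ⊂ G' := fun G hG G' hG' =>
    lt_of_le_of_lt (Finset.le_sup (f := id) hG) (hc'.above G' hG')
  have hnot : ∀ G ∈ 𝒢', G ∉ 𝒢 := fun G hG' hG => (hlt G hG G hG').ne rfl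
  refine ⟨𝒢 ∪ 𝒢', fun G => if G ∈ 𝒢 then f G else f' G, ⟨?_, ?_, ?_, ?_⟩, ?_⟩
  · exact hc.nonempty.mono Finset.subset_union_left
  · intro G hG G' hG'
    rcases Finset.mem_union.1 hG with hG | hG <;> rcases Finset.mem_union.1 hG' with hG' | hG'
    · exact hc.chain G hG G' hG'
    · exact Or.inl (hlt G hG G' hG')
    · exact Or.inr (Or.inr (hlt G' hG' G hG))
    · exact hc'.chain G hG G' hG'
  · intro G hG
    rcases Finset.mem_union.1 hG with hG | hG
    · exact hc.above G hG
    · obtain ⟨G₀, hG₀⟩ := hc.nonempty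
      exact (hc.above G₀ hG₀).trans (hlt G₀ hG₀ G hG)
  · intro G hG
    by_cases hG1 : G ∈ 𝒢
    · simpa [hG1] using hc.mem G hG1
    · have : G ∈ 𝒢' := by simpa [hG1] using hG
      simpa [hG1] using hc'.mem G this
  · unfold val
    rw [Finset.sum_union (Finset.disjoint_left.2 fun G h1 h2 => hnot G h2 h1)]
    congr 1
    · refine Finset.sum_congr rfl fun G hG => ?_
      simp [hG]
    · refine Finset.sum_congr rfl fun G hG => ?_
      simp [hnot G hG]

theorem exists_chain (s : FF) : ∃ g : ℕ → FF, StrictMono g ∧ ∀ n, s ⊂ g n := by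
  classical
  have : NoMaxOrder FF := ⟨fun s => by
    obtain ⟨x, hx⟩ := Infinite.exists_notMem_finset s
    exact ⟨insert x s, Finset.ssubset_insert hx⟩⟩
  obtain ⟨g, hg, h0⟩ := Nat.exists_strictMono' s
  refine ⟨fun n => g (n + 1), fun i j hij => hg (by omega), fun n => ?_⟩
  rw [← h0]
  exact hg (by omega)

theorem color {a : FF → ℕ} {h : FF → Finset ℕ} (hne : ∀ F : FF, F.Nonempty → (h F).Nonempty)
    (hord : ∀ F G : FF, F.Nonempty → F ⊂ G → ∀ x ∈ h F, ∀ y ∈ h G, x < y)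
    (F₀ : FF) (𝒩 : Set (Set ℕ)) (hfin : 𝒩.Finite) (hN : ∀ N ∈ 𝒩, ¬ IsJSet N)
    (hcov : TT a h F₀ ⊆ ⋃₀ 𝒩) : False := by
  classical
  have hw : ∀ N : 𝒩, ∃ F : FF, F.Nonempty ∧ ¬ ∃ (a : ℕ) (β : Finset ℕ), β.Nonempty ∧
      ∀ f ∈ F, a + ∑ t ∈ β, f t ∈ N.1 := by
    intro N
    have := hN N.1 N.2
    unfold IsJSet at this
    push Not at this
    obtain ⟨F, hF, h⟩ := this
    refine ⟨F, hF, ?_⟩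
    push Not
    exact h
  choose W hWne hW using hw
  have : Finite 𝒩 := hfin.to_subtype
  have : Fintype 𝒩 := Fintype.ofFinite _
  let F : FF := Finset.univ.biUnion W
  have hWF : ∀ N, W N ⊆ F := fun N => Finset.subset_biUnion_of_mem W (Finset.mem_univ N)
  obtain ⟨ι, _, hι⟩ := Combinatorics.Line.exists_mono_in_high_dimension F 𝒩
  obtain ⟨g, hg, hgs⟩ := exists_chain (F₀ ∪ F)
  let e := Fintype.equivFin ι
  let G : ι → FF := fun i => g (e i)
  have hGinj : Function.Injective G := fun i j hij =>
    e.injective (Fin.ext (hg.injective hij))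
  have hGs : ∀ i, F₀ ∪ F ⊂ G i := fun i => hgs _
  have hGne : ∀ i, (G i).Nonempty := fun i =>
    Finset.nonempty_of_ne_empty fun h0 => by
      have := hGs i; rw [h0] at this; exact Finset.not_ssubset_empty _ this
  have hGc : ∀ i j, i ≠ j → G i ⊂ G j ∨ G j ⊂ G i := by
    intro i j hij
    rcases lt_trichotomy (e i : ℕ) (e j) with hl | hl | hl
    · exact Or.inl (hg hl)
    · exact absurd (e.injective (Fin.ext hl)) hij
    · exact Or.inr (hg hl)
  let vv : (ι → F) → ℕ := fun w => ∑ i, (a (G i) + ∑ t ∈ h (G i), (w i : ℕ → ℕ) t)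
  have hemp : Nonempty ι := by
    obtain ⟨f, hf⟩ : (g 0).Nonempty := Finset.nonempty_of_ne_empty fun h0 => by
      have := hgs 0; rw [h0] at this; exact Finset.not_ssubset_empty _ this
    have hx : val a h {g 0} (fun _ => f) ∈ TT a h F₀ :=
      ⟨{g 0}, fun _ => f, ⟨by simp, by simp, by
        intro A hA
        rw [Finset.mem_singleton.1 hA]
        exact lt_of_le_of_lt Finset.subset_union_left (hgs 0), by simpa using hf⟩, rfl⟩
    obtain ⟨N, hN, -⟩ := hcov hx
    obtain ⟨l, -⟩ := hι fun _ => ⟨N, hN⟩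
    exact ⟨l.proper.choose⟩
  have hvv : ∀ w, vv w ∈ TT a h F₀ := by
    intro w
    refine ⟨Finset.univ.image G, Function.extend G (fun i => (w i : ℕ → ℕ)) 0, ⟨?_, ?_, ?_, ?_⟩, ?_⟩
    · exact Finset.univ_nonempty.image G
    · intro A hA B hB
      obtain ⟨i, -, rfl⟩ := Finset.mem_image.1 hA
      obtain ⟨j, -, rfl⟩ := Finset.mem_image.1 hB
      by_cases hij : i = j
      · subst hij; simp
      · rcases hGc i j hij with h | h
        · exact Or.inl h
        · exact Or.inr (Or.inr h)
    · intro A hA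
      obtain ⟨i, -, rfl⟩ := Finset.mem_image.1 hA
      exact lt_of_le_of_lt Finset.subset_union_left (hGs i)
    · intro A hA
      obtain ⟨i, -, rfl⟩ := Finset.mem_image.1 hA
      rw [hGinj.extend_apply]
      exact (hGs i).subset (Finset.mem_union_right _ (w i).2)
    · unfold val
      rw [Finset.sum_image (fun i _ j _ hij => hGinj hij)]
      refine Finset.sum_congr rfl fun i _ => ?_
      rw [hGinj.extend_apply]
  have hcol : ∀ w, ∃ N : 𝒩, vv w ∈ N.1 := fun w => by
    obtain ⟨N, hN, hx⟩ := hcov (hvv w)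
    exact ⟨⟨N, hN⟩, hx⟩
  choose C hC using hcol
  obtain ⟨l, N, hl⟩ := hι C
  let P : Finset ι := Finset.univ.filter fun i => l.idxFun i = none
  obtain ⟨f₀, hf₀⟩ := hWne N
  let d : F := ⟨f₀, hWF N hf₀⟩
  apply hW N
  refine ⟨∑ i, a (G i) + ∑ i ∈ Finset.univ.filter (fun i => ¬ l.idxFun i = none),
    ∑ t ∈ h (G i), (l d i : ℕ → ℕ) t, P.biUnion fun i => h (G i), ?_, ?_⟩
  · obtain ⟨i, hi⟩ := l.proper
    obtain ⟨t, ht⟩ := hne _ (hGne i)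
    exact ⟨t, Finset.mem_biUnion.2 ⟨i, by simp [P, hi], ht⟩⟩
  · intro f hf
    have h1 := hC (l ⟨f, hWF N hf⟩)
    rw [hl] at h1
    convert h1 using 1
    rw [Finset.sum_biUnion]
    · simp only [vv]
      rw [Finset.sum_add_distrib, add_assoc]
      congr 1
      rw [add_comm, ← Finset.sum_filter_add_sum_filter_not Finset.univ (fun i => l.idxFun i = none)]
      congr 1
      · refine Finset.sum_congr rfl fun i hi => ?_
        have hi' : l.idxFun i = none := by simpa using hi
        simp [hi']
      · refine Finset.sum_congr rfl fun i hi => ?_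
        have hi' : ¬ l.idxFun i = none := by simpa using hi
        obtain ⟨y, hy⟩ := Option.ne_none_iff_exists'.1 hi'
        simp [hy]
    · intro i _ j _ hij
      rw [Function.onFun, Finset.disjoint_left]
      intro t h1 h2
      rcases hGc i j hij with h | h
      · exact lt_irrefl _ (hord _ _ (hGne i) h t h1 t h2)
      · exact lt_irrefl _ (hord _ _ (hGne j) h t h2 t h1)

theorem exists_base {a : FF → ℕ} {h : FF → Finset ℕ} (hne : ∀ F : FF, F.Nonempty → (h F).Nonempty)
    (hord : ∀ F G : FF, F.Nonempty → F ⊂ G → ∀ x ∈ h F, ∀ y ∈ h G, x < y) :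
    ∃ p : Ultrafilter ℕ, MemJ p ∧ ∀ F, TT a h F ∈ p := by
  classical
  let 𝓕 : Filter ℕ :=
    { sets := {s | ∃ (F : FF) (𝒩 : Set (Set ℕ)), 𝒩.Finite ∧ (∀ N ∈ 𝒩, ¬ IsJSet N) ∧
        TT a h F ⊆ s ∪ ⋃₀ 𝒩}
      univ_sets := ⟨∅, ∅, by simp, by simp, by simp⟩
      sets_of_superset := by
        rintro s t ⟨F, 𝒩, h1, h2, h3⟩ hst
        exact ⟨F, 𝒩, h1, h2, h3.trans (Set.union_subset_union_left _ hst)⟩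
      inter_sets := by
        rintro s t ⟨F, 𝒩, h1, h2, h3⟩ ⟨F', 𝒩', h1', h2', h3'⟩
        refine ⟨F ∪ F', 𝒩 ∪ 𝒩', h1.union h1', ?_, ?_⟩
        · rintro N (hN | hN)
          · exact h2 N hN
          · exact h2' N hN
        · intro x hx
          have hx1 := h3 (TT_anti Finset.subset_union_left hx)
          have hx2 := h3' (TT_anti Finset.subset_union_right hx)
          rw [Set.sUnion_union]
          simp only [Set.mem_union, Set.mem_inter_iff] at *
          tauto }
  have hbot : 𝓕.NeBot := by
    refine ⟨fun hb => ?_⟩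
    have : (∅ : Set ℕ) ∈ 𝓕 := by rw [hb]; trivial
    obtain ⟨F, 𝒩, h1, h2, h3⟩ := this
    exact color hne hord F 𝒩 h1 h2 (by simpa using h3)
  refine ⟨Ultrafilter.of 𝓕, ?_, ?_⟩
  · intro A hA
    by_contra hJ
    have : Aᶜ ∈ 𝓕 := ⟨∅, {A}, by simp, by simpa using hJ, by simp⟩
    have := Ultrafilter.of_le 𝓕 this
    exact Ultrafilter.compl_notMem_iff.2 hA this
  · intro F
    exact Ultrafilter.of_le 𝓕 ⟨F, ∅, by simp, by simp, by simp⟩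

attribute [local instance] Ultrafilter.add Ultrafilter.addSemigroup

theorem exists_idem {a : FF → ℕ} {h : FF → Finset ℕ} (hne : ∀ F : FF, F.Nonempty → (h F).Nonempty)
    (hord : ∀ F G : FF, F.Nonempty → F ⊂ G → ∀ x ∈ h F, ∀ y ∈ h G, x < y) :
    ∃ p : Ultrafilter ℕ, IdempotentUF p ∧ MemJ p ∧ ∀ F, TT a h F ∈ p := by
  obtain ⟨p₀, hp₀⟩ := exists_base (a := a) hne hord
  have hclosed : IsClosed {p : Ultrafilter ℕ | MemJ p ∧ ∀ F, TT a h F ∈ p} := by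
    have : {p : Ultrafilter ℕ | MemJ p ∧ ∀ F, TT a h F ∈ p} =
        (⋂ A ∈ {A : Set ℕ | ¬ IsJSet A}, {p : Ultrafilter ℕ | A ∈ p}ᶜ) ∩
          ⋂ F, {p : Ultrafilter ℕ | TT a h F ∈ p} := by
      ext p
      simp only [Set.mem_ofPred_eq, Set.mem_inter_iff, Set.mem_iInter, Set.mem_compl_iff, MemJ]
      refine and_congr_left fun _ => forall_congr' fun A => not_imp_not.symm
    rw [this]
    exact (isClosed_biInter fun A _ => (ultrafilter_isOpen_basic A).isClosed_compl).inter
      (isClosed_iInter fun F => ultrafilter_isClosed_basic _)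
  obtain ⟨p, hp, hpp⟩ := exists_idempotent_in_compact_add_subsemigroup
    (M := Ultrafilter ℕ) Ultrafilter.continuous_add_left
    {p : Ultrafilter ℕ | MemJ p ∧ ∀ F, TT a h F ∈ p} ⟨p₀, hp₀⟩ hclosed.isCompact (by
      rintro p ⟨hpJ, hpT⟩ q ⟨hqJ, hqT⟩
      refine ⟨?_, ?_⟩
      · intro A hA
        have hA' : {x | {y | x + y ∈ A} ∈ q} ∈ p := hA
        obtain ⟨x, hx⟩ := Ultrafilter.nonempty_of_mem hA'
        intro F hF
        obtain ⟨b, β, hβ, hb⟩ := hqJ _ hx F hF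
        refine ⟨x + b, β, hβ, fun f hf => ?_⟩
        rw [add_assoc]
        exact hb f hf
      · intro F
        have : {x | {y | x + y ∈ TT a h F} ∈ q} ∈ p := by
          refine Filter.mem_of_superset (hpT F) fun x hx => ?_
          obtain ⟨F', hF'⟩ := TT_add hx
          exact Filter.mem_of_superset (hqT F') hF'
        exact this)
  exact ⟨p, hpp, hp⟩

theorem backward_gen (m : ℕ) : ∀ (p : Fin m → Ultrafilter ℕ) (α : Fin m → FF → ℕ)
    (H : Fin m → FF → Finset ℕ), (∀ l F, TT (α l) (H l) F ∈ p l) →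
    ∀ (F : FF) (D : Set (Fin m → ℕ)),
    (∀ (𝒢 : Fin m → Finset FF) (f : Fin m → FF → ℕ → ℕ), (∀ l, IsCh F (𝒢 l) (f l)) →
      (∀ l l', l < l' → ∀ G ∈ 𝒢 l, ∀ G' ∈ 𝒢 l', G ⊂ G') →
      (fun l => val (α l) (H l) (𝒢 l) (f l)) ∈ D) → D ∈ tensor m p := by
  classical
  induction m with
  | zero =>
    intro p α H _ F D hD
    have := hD (fun l => l.elim0) (fun l => l.elim0) (fun l => l.elim0) (fun l => l.elim0)
    have hu : D = Set.univ := by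
      ext v
      simp only [Set.mem_univ, iff_true]
      convert this
    rw [hu]
    exact Filter.univ_mem
  | succ m ih =>
    intro p α H hT F D hD
    rw [mem_tensor_succ]
    refine Filter.mem_of_superset (hT 0 F) ?_
    rintro x ⟨𝒢₀, f₀, hc, rfl⟩
    refine ih (fun i => p i.succ) (fun i => α i.succ) (fun i => H i.succ) (fun l => hT l.succ)
      (𝒢₀.sup id) _ ?_
    intro 𝒢 f hch hlt
    have hlt0 : ∀ l, ∀ G ∈ 𝒢₀, ∀ G' ∈ 𝒢 l, G ⊂ G' := fun l G hG G' hG' =>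
      lt_of_le_of_lt (Finset.le_sup (f := id) hG) ((hch l).above G' hG')
    have := hD (Fin.cons 𝒢₀ 𝒢) (Fin.cons f₀ f) (by
      intro l
      refine Fin.cases ?_ ?_ l
      · simpa using hc
      · intro l
        simp only [Fin.cons_succ]
        refine ⟨(hch l).nonempty, (hch l).chain, fun G hG => ?_, (hch l).mem⟩
        obtain ⟨G₀, hG₀⟩ := hc.nonempty
        exact (hc.above G₀ hG₀).trans (hlt0 l G₀ hG₀ G hG)) (by
      intro l l'
      refine Fin.cases ?_ (fun l' => ?_) l'
      · intro h; exact absurd h (Fin.not_lt_zero _)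
      · refine Fin.cases ?_ (fun l => ?_) l
        · intro _
          simpa using hlt0 l'
        · intro h
          simpa using hlt l l' (Fin.succ_lt_succ_iff.1 h))
    change Fin.cons _ _ ∈ D
    convert this using 1
    funext l
    refine Fin.cases ?_ (fun l => ?_) l
    · simp
    · simp

theorem convert_chain {m : ℕ} {A : Set (Fin m → ℕ)} {α : Fin m → FF → ℕ}
    {H : Fin m → FF → Finset ℕ}
    (h : ∀ n : ℕ, m ≤ n → ∀ G : Fin n → Finset (ℕ → ℕ),
        (∀ i, (G i).Nonempty) → (∀ i j, i < j → G i ⊂ G j) →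
        ∀ f : Fin n → ℕ → ℕ, (∀ i, f i ∈ G i) →
        ∀ β : Fin m → Finset (Fin n),
          (∀ l, (β l).Nonempty) →
          (∀ l l' : Fin m, l < l' → ∀ x ∈ β l, ∀ y ∈ β l', x < y) →
          (fun l => ∑ i ∈ β l, (α l (G i) + ∑ t ∈ H l (G i), f i t)) ∈ A)
    (𝒢 : Fin m → Finset FF) (f : Fin m → FF → ℕ → ℕ) (hch : ∀ l, IsCh ∅ (𝒢 l) (f l))
    (hlt : ∀ l l', l < l' → ∀ G ∈ 𝒢 l, ∀ G' ∈ 𝒢 l', G ⊂ G') :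
    (fun l => val (α l) (H l) (𝒢 l) (f l)) ∈ A := by
  classical
  let U : Finset FF := Finset.univ.biUnion 𝒢
  have hU : ∀ {l G}, G ∈ 𝒢 l → G ∈ U := fun {l G} hG =>
    Finset.mem_biUnion.2 ⟨l, Finset.mem_univ _, hG⟩
  have huniq : ∀ {l l' G}, G ∈ 𝒢 l → G ∈ 𝒢 l' → l = l' := by
    intro l l' G h1 h2
    rcases lt_trichotomy l l' with hl | hl | hl
    · exact absurd rfl (hlt _ _ hl G h1 G h2).ne
    · exact hl
    · exact absurd rfl (hlt _ _ hl G h2 G h1).ne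
  have hchU : ∀ G ∈ U, ∀ G' ∈ U, G ⊂ G' ∨ G = G' ∨ G' ⊂ G := by
    intro G hG G' hG'
    obtain ⟨l, -, hl⟩ := Finset.mem_biUnion.1 hG
    obtain ⟨l', -, hl'⟩ := Finset.mem_biUnion.1 hG'
    rcases lt_trichotomy l l' with h | rfl | h
    · exact Or.inl (hlt _ _ h G hl G' hl')
    · exact (hch l).chain G hl G' hl'
    · exact Or.inr (Or.inr (hlt _ _ h G' hl' G hl))
  have hcardlt : ∀ G ∈ U, ∀ G' ∈ U, G.card < G'.card → G ⊂ G' := by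
    intro G hG G' hG' hc
    rcases hchU G hG G' hG' with h | rfl | h
    · exact h
    · omega
    · have := Finset.card_lt_card h; omega
  have hcardinj : ∀ G ∈ U, ∀ G' ∈ U, G.card = G'.card → G = G' := by
    intro G hG G' hG' hc
    rcases hchU G hG G' hG' with h | h | h
    · have := Finset.card_lt_card h; omega
    · exact h
    · have := Finset.card_lt_card h; omega
  let S : Finset ℕ := U.image Finset.card
  let e : Fin S.card ↪o ℕ := S.orderEmbOfFin rfl
  have he : ∀ i, ∃ G ∈ U, G.card = e i := fun i =>
    Finset.mem_image.1 (S.orderEmbOfFin_mem rfl i)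
  choose G hGU hGc using he
  have hsurj : ∀ G' ∈ U, ∃ i, G i = G' := by
    intro G' hG'
    have : G'.card ∈ Set.range e := by
      rw [S.range_orderEmbOfFin rfl]
      exact Finset.mem_coe.2 (Finset.mem_image_of_mem _ hG')
    obtain ⟨i, hi⟩ := this
    exact ⟨i, hcardinj _ (hGU i) _ hG' ((hGc i).trans hi)⟩
  have hl : ∀ i, ∃ l, G i ∈ 𝒢 l := fun i => by
    obtain ⟨l, -, hl⟩ := Finset.mem_biUnion.1 (hGU i)
    exact ⟨l, hl⟩
  choose L hL using hl
  have hGlt : ∀ i j, i < j → G i ⊂ G j := fun i j hij =>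
    hcardlt _ (hGU i) _ (hGU j) (by rw [hGc, hGc]; exact e.strictMono hij)
  have hGinj : Function.Injective G := fun i j hij => e.injective (by rw [← hGc, ← hGc, hij])
  have hLsurj : Function.Surjective L := fun l => by
    obtain ⟨G', hG'⟩ := (hch l).nonempty
    obtain ⟨i, rfl⟩ := hsurj G' (hU hG')
    exact ⟨i, huniq (hL i) hG'⟩
  have hmn : m ≤ S.card := by
    simpa using Fintype.card_le_of_surjective L hLsurj
  have key := h S.card hmn G
    (fun i => Finset.nonempty_iff_ne_empty.2 fun h0 => by
      have := (hch (L i)).above _ (hL i)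
      rw [h0] at this
      exact this.ne rfl)
    hGlt (fun i => f (L i) (G i)) (fun i => (hch (L i)).mem _ (hL i))
    (fun l => Finset.univ.filter fun i => G i ∈ 𝒢 l)
    (fun l => by
      obtain ⟨i, rfl⟩ := hLsurj l
      exact ⟨i, by simpa using hL i⟩)
    (by
      intro l l' hll x hx y hy
      simp only [Finset.mem_filter, Finset.mem_univ, true_and] at hx hy
      have h1 := hlt l l' hll _ hx _ hy
      by_contra hxy
      rcases (not_lt.1 hxy).lt_or_eq with h2 | h2
      · exact (h1.trans (hGlt _ _ h2)).ne rfl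
      · rw [h2] at h1; exact h1.ne rfl)
  convert key using 1
  funext l
  symm
  unfold val
  refine Finset.sum_bij (fun i _ => G i) ?_ ?_ ?_ ?_
  · intro i hi; simpa using hi
  · intro i _ j _ hij; exact hGinj hij
  · intro G' hG'
    obtain ⟨i, rfl⟩ := hsurj G' (hU hG')
    exact ⟨i, by simpa using hG', rfl⟩
  · intro i hi
    have : L i = l := huniq (hL i) (by simpa using hi)
    simp only [this]


/-- Multidimensional Stronger Central Sets Theorem II (finitary form). -/
theorem multidimensional_stronger_CST_II (m : ℕ) (hm : 1 ≤ m) (A : Set (Fin m → ℕ)) :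
    (∃ (α : Fin m → Finset (ℕ → ℕ) → ℕ) (H : Fin m → Finset (ℕ → ℕ) → Finset ℕ),
      (∀ (j : Fin m) (F : Finset (ℕ → ℕ)), F.Nonempty → (H j F).Nonempty) ∧
      (∀ (j : Fin m) (F G : Finset (ℕ → ℕ)), F.Nonempty → F ⊂ G →
        ∀ x ∈ H j F, ∀ y ∈ H j G, x < y) ∧
      (∀ n : ℕ, m ≤ n → ∀ G : Fin n → Finset (ℕ → ℕ),
        (∀ i, (G i).Nonempty) → (∀ i j, i < j → G i ⊂ G j) →
        ∀ f : Fin n → ℕ → ℕ, (∀ i, f i ∈ G i) →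
        ∀ β : Fin m → Finset (Fin n),
          (∀ l, (β l).Nonempty) →
          (∀ l l' : Fin m, l < l' → ∀ x ∈ β l, ∀ y ∈ β l', x < y) →
          (fun l => ∑ i ∈ β l, (α l (G i) + ∑ t ∈ H l (G i), f i t)) ∈ A))
    ↔
    (∃ p : Fin m → Ultrafilter ℕ,
      (∀ i, IdempotentUF (p i)) ∧ (∀ i, MemJ (p i)) ∧ A ∈ tensor m p) := by
  constructor
  · rintro ⟨α, H, h1, h2, h3⟩
    choose p hp hJ hT using fun l => exists_idem (a := α l) (h1 l) (h2 l)
    exact ⟨p, hp, hJ, backward_gen m p α H hT ∅ A (convert_chain h3)⟩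
  · rintro ⟨p, hp, hJ, hA⟩
    obtain ⟨α, H, h1, h2, h3⟩ := forward_gen m p hp hJ (fun _ => A) (fun _ => hA)
    refine ⟨α, H, fun j F _ => h1 j F, fun j F G _ => h2 j F G, ?_⟩
    intro n _ G _ hG f hf β hβ hlt
    exact h3 n G hG f hf β hβ hlt ∅ (fun _ _ _ => Finset.empty_subset _)

end MultiCST
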